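/- For every ε > 0 there exists a nonzero continuously differentiable function φ : ℝ² → ℝ with compact support contained in the open upper half-plane ℝ × (0, ∞) such that ∫∫ ((∂φ/∂x)(x,y)² + (∂φ/∂y)(x,y)²) dx dy < (1/4 + ε) ∫∫ φ(x,y)²/y² dx dy. Consequently the infimum over all nonzero compactly supported C¹ functions on ℝ × (0,∞) of the quotient (∫∫ |∇φ|² dx dy)/(∫∫ φ²/y² dx dy) equals exactly 1/4. -/

import Mathlib

open MeasureTheory

/-!
The substitution `g y = √y * F (log y)` turns the Hardy quotient into a shifted one-dimensional
Rayleigh quotient: `∫ g² / y² = ∫ F²` and `∫ g'² = ∫ F'² + (1/4) ∫ F²`. Discarding `∫ F'²` gives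
Hardy's inequality, and integrating it over vertical lines gives the lower bound `1/4`. Conversely,
stretching a bump function makes `∫ F'²` negligible against `∫ F²`, so that `g` is nearly extremal;
multiplying `g y` by a second stretched bump function in `x` makes `∫ (∂φ/∂x)²` negligible too.
-/

open scoped ContDiff

section CompactSupport

variable {X : Type*} [TopologicalSpace X]

lemma hasCompactSupport_sq {f : X → ℝ} (hfc : HasCompactSupport f) :
    HasCompactSupport (fun x => f x ^ 2) :=
  hfc.mono fun _ hx => (pow_ne_zero_iff two_ne_zero).1 hx

lemma integrable_sq_of_hasCompactSupport [MeasurableSpace X] [OpensMeasurableSpace X]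
    {μ : Measure X} [IsFiniteMeasureOnCompacts μ] {f : X → ℝ} (hf : Continuous f)
    (hfc : HasCompactSupport f) : Integrable (fun x => f x ^ 2) μ :=
  (hf.pow 2).integrable_of_hasCompactSupport (hasCompactSupport_sq hfc)

lemma integral_sq_pos_of_hasCompactSupport [MeasurableSpace X] [OpensMeasurableSpace X]
    {μ : Measure X} [IsFiniteMeasureOnCompacts μ] [μ.IsOpenPosMeasure] {f : X → ℝ}
    (hf : Continuous f) (hfc : HasCompactSupport f) (hne : f ≠ 0) : 0 < ∫ x, f x ^ 2 ∂μ := by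
  obtain ⟨x, hx⟩ := Function.ne_iff.1 hne
  exact (hf.pow 2).integral_pos_of_hasCompactSupport_nonneg_nonzero (hasCompactSupport_sq hfc)
    (fun x => sq_nonneg (f x)) (pow_ne_zero 2 hx)

lemma continuous_div_snd {φ : X × ℝ → ℝ} (hφ : Continuous φ)
    (hφs : tsupport φ ⊆ {p | 0 < p.2}) : Continuous (fun p => φ p / p.2) := by
  have hsub : tsupport (fun p => φ p / p.2) ⊆ tsupport φ :=
    closure_mono fun p hp => (div_ne_zero_iff.1 hp).1
  exact continuous_of_tsupport fun p hp =>
    hφ.continuousAt.div continuousAt_snd (hφs (hsub hp)).ne'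

lemma hasCompactSupport_div_snd {φ : X × ℝ → ℝ} (hφc : HasCompactSupport φ) :
    HasCompactSupport (fun p => φ p / p.2) :=
  hφc.mono fun _ hp => (div_ne_zero_iff.1 hp).1

lemma integrable_fderiv_apply_sq {E : Type*} [NormedAddCommGroup E] [NormedSpace ℝ E]
    [MeasurableSpace E] [OpensMeasurableSpace E] {μ : Measure E} [IsFiniteMeasureOnCompacts μ]
    {f : E → ℝ} (hf : ContDiff ℝ 1 f) (hfc : HasCompactSupport f) (v : E) :
    Integrable (fun x => fderiv ℝ f x v ^ 2) μ :=
  integrable_sq_of_hasCompactSupport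
    ((hf.continuous_fderiv one_ne_zero).clm_apply continuous_const) (hfc.fderiv_apply ℝ v)

end CompactSupport

section Line

variable {F : ℝ → ℝ}

lemma integral_mul_deriv_self_eq_zero (hF : ContDiff ℝ 1 F) (hFc : HasCompactSupport F) :
    ∫ t, F t * deriv F t = 0 := by
  have hderiv (t : ℝ) : HasDerivAt (fun t => F t ^ 2 / 2) (F t * deriv F t) t :=
    (((hF.differentiable one_ne_zero t).hasDerivAt.fun_pow 2).div_const 2).congr_deriv
      (by push_cast; ring)
  exact integral_eq_zero_of_hasDerivAt_of_integrable hderiv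
    ((hF.continuous.mul (hF.continuous_deriv le_rfl)).integrable_of_hasCompactSupport hFc.mul_right)
    ((integrable_sq_of_hasCompactSupport hF.continuous hFc).div_const 2)

lemma integral_half_add_deriv_sq (hF : ContDiff ℝ 1 F) (hFc : HasCompactSupport F) :
    ∫ t, (F t / 2 + deriv F t) ^ 2 = (∫ t, deriv F t ^ 2) + 1 / 4 * ∫ t, F t ^ 2 := by
  have hF' : Continuous (deriv F) := hF.continuous_deriv le_rfl
  have iF : Integrable (fun t => F t ^ 2) :=
    integrable_sq_of_hasCompactSupport hF.continuous hFc
  have iF' : Integrable (fun t => deriv F t ^ 2) :=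
    integrable_sq_of_hasCompactSupport hF' hFc.deriv
  have iFF' : Integrable (fun t => F t * deriv F t) :=
    (hF.continuous.mul hF').integrable_of_hasCompactSupport hFc.mul_right
  calc ∫ t, (F t / 2 + deriv F t) ^ 2
      = ∫ t, (deriv F t ^ 2 + 1 / 4 * F t ^ 2 + F t * deriv F t) := by
        congr 1 with t
        ring
    _ = (∫ t, deriv F t ^ 2) + 1 / 4 * ∫ t, F t ^ 2 := by
        rw [integral_add (by fun_prop) iFF', integral_add iF' (iF.const_mul _),
          integral_mul_deriv_self_eq_zero hF hFc, integral_const_mul, add_zero]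

lemma exists_integral_deriv_sq_lt {ε : ℝ} (hε : 0 < ε) :
    ∃ f : ℝ → ℝ, ContDiff ℝ ∞ f ∧ HasCompactSupport f ∧
      ∫ x, deriv f x ^ 2 < ε * ∫ x, f x ^ 2 := by
  let b : ContDiffBump (0 : ℝ) := default
  have hb_pos : 0 < ∫ x, b x ^ 2 :=
    integral_sq_pos_of_hasCompactSupport b.continuous b.hasCompactSupport
      fun h => (b.pos_of_mem_ball (Metric.mem_ball_self b.rOut_pos)).ne' (congrFun h 0)
  obtain ⟨c, hc, hcb⟩ := exists_pos_mul_lt (mul_pos hε hb_pos) (∫ x, deriv b x ^ 2)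
  have hη : 0 < √c := Real.sqrt_pos.2 hc
  have scale (G : ℝ → ℝ) : ∫ x, G (√c * x) = (√c)⁻¹ * ∫ x, G x := by
    rw [Measure.integral_comp_mul_left, abs_of_pos (inv_pos.2 hη), smul_eq_mul]
  refine ⟨fun x => b (√c * x), b.contDiff.comp (contDiff_const.mul contDiff_id),
    b.hasCompactSupport.comp_homeomorph (Homeomorph.mulLeft₀ (√c) hη.ne'), ?_⟩
  calc ∫ x, deriv (fun x => b (√c * x)) x ^ 2
      = ∫ x, c * deriv b (√c * x) ^ 2 := by
        congr 1 with x
        rw [deriv_comp_mul_left, smul_eq_mul, mul_pow, Real.sq_sqrt hc.le]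
    _ = (√c)⁻¹ * ((∫ x, deriv b x ^ 2) * c) := by
        rw [integral_const_mul, scale fun x => deriv b x ^ 2]
        ring
    _ < (√c)⁻¹ * (ε * ∫ x, b x ^ 2) := mul_lt_mul_of_pos_left hcb (inv_pos.2 hη)
    _ = ε * ∫ x, b (√c * x) ^ 2 := by
        rw [scale fun x => b x ^ 2]
        ring

end Line

lemma integral_eq_integral_exp_smul_comp_exp {E : Type*} [NormedAddCommGroup E] [NormedSpace ℝ E]
    {G : ℝ → E} (hG : Function.support G ⊆ Set.Ioi 0) :
    ∫ y, G y = ∫ t, Real.exp t • G (Real.exp t) := by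
  have h := integral_image_eq_integral_abs_deriv_smul MeasurableSet.univ
    (fun t _ => (Real.hasDerivAt_exp t).hasDerivWithinAt) Real.exp_injective.injOn G
  rw [Set.image_univ, Real.range_exp, setIntegral_univ] at h
  simp only [Real.abs_exp] at h
  rw [← h, setIntegral_eq_integral_of_forall_compl_eq_zero
    fun y hy => Function.notMem_support.1 fun hy' => hy (hG hy')]

/-- The Emden–Fowler substitution `F ↦ (y ↦ √y F(log y))` from functions on the line to functions
on the half-line, an isometry from `L²(dt)` onto `L²(dy / y²)`. The value is `0` for `y ≤ 0`,
because `√y = 0` there. -/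
noncomputable def emdenFowler (F : ℝ → ℝ) (y : ℝ) : ℝ :=
  √y * F (Real.log y)

section EmdenFowler

variable {F g : ℝ → ℝ}

lemma emdenFowler_of_nonpos (F : ℝ → ℝ) {y : ℝ} (hy : y ≤ 0) : emdenFowler F y = 0 := by
  rw [emdenFowler, Real.sqrt_eq_zero_of_nonpos hy, zero_mul]

lemma emdenFowler_exp (F : ℝ → ℝ) (t : ℝ) :
    emdenFowler F (Real.exp t) = Real.exp (t / 2) * F t := by
  rw [emdenFowler, ← Real.exp_half, Real.log_exp]

lemma support_emdenFowler (F : ℝ → ℝ) :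
    Function.support (emdenFowler F) = Real.exp '' Function.support F := by
  ext y
  rcases le_or_gt y 0 with hy | hy
  · simp only [Function.mem_support, emdenFowler_of_nonpos F hy, ne_eq, not_true_eq_false,
      Set.mem_image, false_iff, not_exists, not_and]
    exact fun t _ ht => (Real.exp_pos t).not_ge (ht ▸ hy)
  · obtain ⟨t, rfl⟩ : ∃ t, Real.exp t = y := ⟨_, Real.exp_log hy⟩
    rw [Real.exp_injective.mem_set_image, Function.mem_support, Function.mem_support,
      emdenFowler_exp, mul_ne_zero_iff_left (Real.exp_pos _).ne']

lemma tsupport_emdenFowler_subset (hFc : HasCompactSupport F) :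
    tsupport (emdenFowler F) ⊆ Real.exp '' tsupport F :=
  closure_minimal (support_emdenFowler F ▸ Set.image_mono (subset_tsupport F))
    (hFc.isCompact.image Real.continuous_exp).isClosed

lemma hasCompactSupport_emdenFowler (hFc : HasCompactSupport F) :
    HasCompactSupport (emdenFowler F) :=
  (hFc.isCompact.image Real.continuous_exp).of_isClosed_subset (isClosed_tsupport _)
    (tsupport_emdenFowler_subset hFc)

lemma tsupport_emdenFowler_subset_Ioi (hFc : HasCompactSupport F) :
    tsupport (emdenFowler F) ⊆ Set.Ioi 0 :=
  (tsupport_emdenFowler_subset hFc).trans (Set.image_subset_iff.2 fun t _ => Real.exp_pos t)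

lemma contDiff_emdenFowler {n : WithTop ℕ∞} (hF : ContDiff ℝ n F) (hFc : HasCompactSupport F) :
    ContDiff ℝ n (emdenFowler F) := by
  refine contMDiff_iff_contDiff.1 (contMDiff_of_tsupport fun y hy => ContDiffAt.contMDiffAt ?_)
  have hy0 : y ≠ 0 := (tsupport_emdenFowler_subset_Ioi hFc hy).ne'
  exact (Real.contDiffAt_sqrt hy0).mul (hF.contDiffAt.comp y (Real.contDiffAt_log.2 hy0))

lemma deriv_emdenFowler_exp {t : ℝ} (hF : DifferentiableAt ℝ F t) :
    deriv (emdenFowler F) (Real.exp t) = Real.exp (-(t / 2)) * (F t / 2 + deriv F t) := by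
  have hsqrt := Real.hasDerivAt_sqrt (Real.exp_pos t).ne'
  have hlog := Real.hasDerivAt_log (Real.exp_pos t).ne'
  have hF' : HasDerivAt F (deriv F t) (Real.log (Real.exp t)) := by
    rw [Real.log_exp]
    exact hF.hasDerivAt
  have hexp : Real.exp t = Real.exp (t / 2) ^ 2 := by rw [← Real.exp_nat_mul]; congr 1; ring
  have h : deriv (emdenFowler F) (Real.exp t) = _ := (hsqrt.mul (hF'.comp _ hlog)).deriv
  rw [h, Function.comp_apply, Real.log_exp, ← Real.exp_half, hexp, Real.exp_neg]
  field_simp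

lemma exists_emdenFowler_eq {n : WithTop ℕ∞} (hg : ContDiff ℝ n g) (hgc : HasCompactSupport g)
    (hgs : tsupport g ⊆ Set.Ioi 0) :
    ∃ F : ℝ → ℝ, ContDiff ℝ n F ∧ HasCompactSupport F ∧ emdenFowler F = g := by
  refine ⟨fun t => Real.exp (-(t / 2)) * g (Real.exp t), ?_, ?_, ?_⟩
  · exact (contDiff_id.div_const 2).neg.exp.mul (hg.comp Real.contDiff_exp)
  · have hlog : IsCompact (Real.log '' tsupport g) :=
      hgc.isCompact.image_of_continuousOn
        (Real.continuousOn_log.mono fun y hy => (hgs hy).ne')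
    refine .of_support_subset_isCompact hlog fun t ht => ?_
    exact ⟨Real.exp t, subset_tsupport g (right_ne_zero_of_mul ht), Real.log_exp t⟩
  · ext y
    rcases le_or_gt y 0 with hy | hy
    · rw [emdenFowler_of_nonpos _ hy,
        image_eq_zero_of_notMem_tsupport fun hy' => (hgs hy').not_ge hy]
    · obtain ⟨t, rfl⟩ : ∃ t, Real.exp t = y := ⟨_, Real.exp_log hy⟩
      rw [emdenFowler_exp, ← mul_assoc, ← Real.exp_add, add_neg_cancel, Real.exp_zero, one_mul]

lemma integral_emdenFowler_sq_div_sq (F : ℝ → ℝ) :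
    ∫ y, emdenFowler F y ^ 2 / y ^ 2 = ∫ t, F t ^ 2 := by
  rw [integral_eq_integral_exp_smul_comp_exp fun y hy => ?_]
  · congr 1 with t
    rw [emdenFowler_exp, mul_pow, ← Real.exp_nat_mul, smul_eq_mul, Nat.cast_two,
      mul_div_cancel₀ t two_ne_zero]
    field_simp
  · by_contra hy0
    exact hy (by simp only [emdenFowler_of_nonpos F (not_lt.1 hy0), zero_pow two_ne_zero, zero_div])

lemma integral_deriv_emdenFowler_sq (hF : ContDiff ℝ 1 F) (hFc : HasCompactSupport F) :
    ∫ y, deriv (emdenFowler F) y ^ 2 = (∫ t, deriv F t ^ 2) + 1 / 4 * ∫ t, F t ^ 2 := by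
  rw [integral_eq_integral_exp_smul_comp_exp fun y hy => ?_, ← integral_half_add_deriv_sq hF hFc]
  · congr 1 with t
    rw [deriv_emdenFowler_exp (hF.differentiable one_ne_zero t), mul_pow, ← Real.exp_nat_mul,
      smul_eq_mul, ← mul_assoc, ← Real.exp_add,
      show t + (2 : ℕ) * -(t / 2) = 0 by push_cast; ring, Real.exp_zero, one_mul]
  · exact tsupport_emdenFowler_subset_Ioi hFc
      (support_deriv_subset (pow_ne_zero_iff two_ne_zero |>.1 hy))

end EmdenFowler

theorem hardy_inequality {g : ℝ → ℝ} (hg : ContDiff ℝ 1 g) (hgc : HasCompactSupport g)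
    (hgs : tsupport g ⊆ Set.Ioi 0) :
    1 / 4 * ∫ y, g y ^ 2 / y ^ 2 ≤ ∫ y, deriv g y ^ 2 := by
  obtain ⟨F, hF, hFc, rfl⟩ := exists_emdenFowler_eq hg hgc hgs
  rw [integral_emdenFowler_sq_div_sq, integral_deriv_emdenFowler_sq hF hFc]
  exact le_add_of_nonneg_left (integral_nonneg fun t => sq_nonneg _)

theorem exists_near_extremal_hardy {ε : ℝ} (hε : 0 < ε) :
    ∃ g : ℝ → ℝ, ContDiff ℝ ∞ g ∧ HasCompactSupport g ∧ tsupport g ⊆ Set.Ioi 0 ∧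
      ∫ y, deriv g y ^ 2 < (1 / 4 + ε) * ∫ y, g y ^ 2 / y ^ 2 := by
  obtain ⟨F, hF, hFc, hlt⟩ := exists_integral_deriv_sq_lt hε
  refine ⟨emdenFowler F, contDiff_emdenFowler hF hFc, hasCompactSupport_emdenFowler hFc,
    tsupport_emdenFowler_subset_Ioi hFc, ?_⟩
  rw [integral_emdenFowler_sq_div_sq,
    integral_deriv_emdenFowler_sq (hF.of_le (mod_cast le_top)) hFc]
  linarith

theorem hardy_inequality_prod {E : Type*} [NormedAddCommGroup E] [NormedSpace ℝ E]
    [MeasurableSpace E] [OpensMeasurableSpace E] {μ : Measure E} [IsFiniteMeasureOnCompacts μ]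
    [SFinite μ] {φ : E × ℝ → ℝ} (hφ : ContDiff ℝ 1 φ) (hφc : HasCompactSupport φ)
    (hφs : tsupport φ ⊆ {p | 0 < p.2}) :
    1 / 4 * ∫ p, φ p ^ 2 / p.2 ^ 2 ∂μ.prod volume ≤
      ∫ p, fderiv ℝ φ p (0, 1) ^ 2 ∂μ.prod volume := by
  have hquot : Integrable (fun p => φ p ^ 2 / p.2 ^ 2) (μ.prod volume) := by
    simpa only [div_pow] using integrable_sq_of_hasCompactSupport
      (continuous_div_snd hφ.continuous hφs) (hasCompactSupport_div_snd hφc)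
  have hderiv : Integrable (fun p => fderiv ℝ φ p (0, 1) ^ 2) (μ.prod volume) :=
    integrable_fderiv_apply_sq hφ hφc _
  have hslice (x : E) :
      1 / 4 * ∫ y, φ (x, y) ^ 2 / y ^ 2 ≤ ∫ y, fderiv ℝ φ (x, y) (0, 1) ^ 2 := by
    have hemb : Topology.IsClosedEmbedding (Prod.mk x : ℝ → E × ℝ) :=
      Function.LeftInverse.isClosedEmbedding (f := Prod.snd) (fun _ => rfl) continuous_snd
        (by fun_prop)
    have hslice_deriv (y : ℝ) : deriv (fun y => φ (x, y)) y = fderiv ℝ φ (x, y) (0, 1) :=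
      ((hφ.differentiable one_ne_zero (x, y)).hasFDerivAt.comp_hasDerivAt y
        ((hasDerivAt_const y x).prodMk (hasDerivAt_id y))).deriv
    simpa only [hslice_deriv] using hardy_inequality (g := fun y => φ (x, y))
      (hφ.comp (contDiff_prodMk_right x)) (hφc.comp_isClosedEmbedding hemb)
      fun y hy => hφs (tsupport_comp_subset_preimage φ hemb.continuous hy)
  rw [integral_prod _ hquot, integral_prod _ hderiv, ← integral_const_mul]
  exact integral_mono (hquot.integral_prod_left.const_mul _) hderiv.integral_prod_left hslice

/-- The Dirichlet energy `∬ |∇φ|² dx dy`. By conformal invariance it is also the Dirichlet energy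
for the hyperbolic metric of the upper half-plane. -/
noncomputable def dirichletEnergy (φ : ℝ × ℝ → ℝ) : ℝ :=
  ∫ p : ℝ × ℝ, (fderiv ℝ φ p (1, 0) ^ 2 + fderiv ℝ φ p (0, 1) ^ 2)

/-- The squared `L²` norm for the hyperbolic area `dx dy / y²` of the upper half-plane. The integral
runs over the whole plane, since the functions of interest are supported in the half-plane. -/
noncomputable def hyperbolicNormSq (φ : ℝ × ℝ → ℝ) : ℝ :=
  ∫ p : ℝ × ℝ, φ p ^ 2 / p.2 ^ 2

section HalfPlane

variable {φ : ℝ × ℝ → ℝ}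

lemma hyperbolicNormSq_pos (hφ : Continuous φ) (hφc : HasCompactSupport φ)
    (hφs : tsupport φ ⊆ {p | 0 < p.2}) (hne : φ ≠ 0) : 0 < hyperbolicNormSq φ := by
  obtain ⟨p, hp⟩ := Function.ne_iff.1 hne
  have hquot_ne : (fun p => φ p / p.2) ≠ 0 := fun h =>
    div_ne_zero hp (hφs (subset_tsupport φ hp)).ne' (congrFun h p)
  simpa only [hyperbolicNormSq, div_pow] using integral_sq_pos_of_hasCompactSupport
    (μ := volume) (continuous_div_snd hφ hφs) (hasCompactSupport_div_snd hφc) hquot_ne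

lemma dirichletEnergy_eq_add (hφ : ContDiff ℝ 1 φ) (hφc : HasCompactSupport φ) :
    dirichletEnergy φ = (∫ p, fderiv ℝ φ p (1, 0) ^ 2) + ∫ p, fderiv ℝ φ p (0, 1) ^ 2 :=
  integral_add (integrable_fderiv_apply_sq hφ hφc _) (integrable_fderiv_apply_sq hφ hφc _)

theorem quarter_mul_hyperbolicNormSq_le_dirichletEnergy (hφ : ContDiff ℝ 1 φ)
    (hφc : HasCompactSupport φ) (hφs : tsupport φ ⊆ {p | 0 < p.2}) :
    1 / 4 * hyperbolicNormSq φ ≤ dirichletEnergy φ := by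
  rw [dirichletEnergy_eq_add hφ hφc]
  exact (hardy_inequality_prod hφ hφc hφs).trans
    (le_add_of_nonneg_left (integral_nonneg fun p => sq_nonneg _))

end HalfPlane

section ProductFunctions

lemma tsupport_fst_mul_snd_subset {X Y : Type*} [TopologicalSpace X] [TopologicalSpace Y]
    (f : X → ℝ) (g : Y → ℝ) :
    tsupport (fun p : X × Y => f p.1 * g p.2) ⊆ tsupport f ×ˢ tsupport g :=
  closure_minimal (fun _ hp => ⟨subset_tsupport f (left_ne_zero_of_mul hp),
    subset_tsupport g (right_ne_zero_of_mul hp)⟩) ((isClosed_tsupport f).prod (isClosed_tsupport g))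

lemma hasCompactSupport_fst_mul_snd {X Y : Type*} [TopologicalSpace X] [TopologicalSpace Y]
    {f : X → ℝ} {g : Y → ℝ} (hfc : HasCompactSupport f) (hgc : HasCompactSupport g) :
    HasCompactSupport (fun p : X × Y => f p.1 * g p.2) :=
  (hfc.isCompact.prod hgc.isCompact).of_isClosed_subset (isClosed_tsupport _)
    (tsupport_fst_mul_snd_subset f g)

lemma contDiff_fst_mul_snd {E F : Type*} [NormedAddCommGroup E] [NormedSpace ℝ E]
    [NormedAddCommGroup F] [NormedSpace ℝ F] {n : WithTop ℕ∞} {f : E → ℝ} {g : F → ℝ}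
    (hf : ContDiff ℝ n f) (hg : ContDiff ℝ n g) :
    ContDiff ℝ n (fun p : E × F => f p.1 * g p.2) :=
  (hf.comp contDiff_fst).mul (hg.comp contDiff_snd)

variable {f g : ℝ → ℝ}

lemma fderiv_fst_mul_snd_apply {p : ℝ × ℝ} (hf : DifferentiableAt ℝ f p.1)
    (hg : DifferentiableAt ℝ g p.2) (v : ℝ × ℝ) :
    fderiv ℝ (fun p : ℝ × ℝ => f p.1 * g p.2) p v =
      deriv f p.1 * v.1 * g p.2 + f p.1 * (deriv g p.2 * v.2) := by
  have hf' := hf.hasDerivAt.comp_hasFDerivAt p (hasFDerivAt_fst (𝕜 := ℝ))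
  have hg' := hg.hasDerivAt.comp_hasFDerivAt p (hasFDerivAt_snd (𝕜 := ℝ))
  have h := (hf'.mul hg').fderiv
  simp only [Function.comp_def, Pi.mul_def] at h
  rw [h]
  simp only [add_apply, smul_apply, ContinuousLinearMap.coe_snd', ContinuousLinearMap.coe_fst',
    smul_eq_mul]
  ring

lemma hyperbolicNormSq_fst_mul_snd (f g : ℝ → ℝ) :
    hyperbolicNormSq (fun p => f p.1 * g p.2) = (∫ x, f x ^ 2) * ∫ y, g y ^ 2 / y ^ 2 := by
  simp only [hyperbolicNormSq, mul_pow, mul_div_assoc]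
  exact integral_prod_mul (fun x => f x ^ 2) fun y => g y ^ 2 / y ^ 2

lemma dirichletEnergy_fst_mul_snd (hf : ContDiff ℝ 1 f) (hfc : HasCompactSupport f)
    (hg : ContDiff ℝ 1 g) (hgc : HasCompactSupport g) :
    dirichletEnergy (fun p => f p.1 * g p.2) =
      (∫ x, deriv f x ^ 2) * (∫ y, g y ^ 2) + (∫ x, f x ^ 2) * ∫ y, deriv g y ^ 2 := by
  rw [dirichletEnergy_eq_add (contDiff_fst_mul_snd hf hg) (hasCompactSupport_fst_mul_snd hfc hgc)]
  simp only [fderiv_fst_mul_snd_apply (hf.differentiable one_ne_zero _)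
    (hg.differentiable one_ne_zero _), mul_zero, mul_one, zero_mul, add_zero, zero_add, mul_pow]
  exact congrArg₂ (· + ·) (integral_prod_mul (fun x => deriv f x ^ 2) fun y => g y ^ 2)
    (integral_prod_mul (fun x => f x ^ 2) fun y => deriv g y ^ 2)

end ProductFunctions

theorem exists_dirichletEnergy_lt {ε : ℝ} (hε : 0 < ε) :
    ∃ φ : ℝ × ℝ → ℝ, ContDiff ℝ ∞ φ ∧ HasCompactSupport φ ∧ tsupport φ ⊆ {p | 0 < p.2} ∧
      φ ≠ 0 ∧ dirichletEnergy φ < (1 / 4 + ε) * hyperbolicNormSq φ := by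
  obtain ⟨g, hg, hgc, hgs, hgap⟩ := exists_near_extremal_hardy hε
  obtain ⟨c, hc, hcg⟩ := exists_pos_mul_lt (sub_pos.2 hgap) (∫ y, g y ^ 2)
  obtain ⟨f, hf, hfc, hfc_lt⟩ := exists_integral_deriv_sq_lt hc
  have hf_pos : 0 < ∫ x, f x ^ 2 :=
    pos_of_mul_pos_right ((integral_nonneg fun x => sq_nonneg _).trans_lt hfc_lt) hc.le
  have henergy : dirichletEnergy (fun p => f p.1 * g p.2) <
      (1 / 4 + ε) * hyperbolicNormSq (fun p => f p.1 * g p.2) := by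
    rw [hyperbolicNormSq_fst_mul_snd, dirichletEnergy_fst_mul_snd (hf.of_le (mod_cast le_top)) hfc
      (hg.of_le (mod_cast le_top)) hgc]
    have hx : (∫ x, deriv f x ^ 2) * ∫ y, g y ^ 2 ≤ (c * ∫ x, f x ^ 2) * ∫ y, g y ^ 2 :=
      mul_le_mul_of_nonneg_right hfc_lt.le (integral_nonneg fun y => sq_nonneg _)
    have hy := mul_lt_mul_of_pos_left hcg hf_pos
    linarith
  refine ⟨_, contDiff_fst_mul_snd hf hg, hasCompactSupport_fst_mul_snd hfc hgc,
    fun p hp => hgs (tsupport_fst_mul_snd_subset f g hp).2, fun h0 => ?_, henergy⟩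
  rw [h0] at henergy
  simp [dirichletEnergy, hyperbolicNormSq] at henergy

theorem stmt_2_general {n : ℕ∞} (hn : 1 ≤ n) :
    (∀ ε > (0 : ℝ), ∃ φ : ℝ × ℝ → ℝ, ContDiff ℝ n φ ∧ HasCompactSupport φ ∧
      tsupport φ ⊆ {p : ℝ × ℝ | 0 < p.2} ∧ φ ≠ 0 ∧
      dirichletEnergy φ < (1 / 4 + ε) * hyperbolicNormSq φ) ∧
    sInf {r : ℝ | ∃ φ : ℝ × ℝ → ℝ, ContDiff ℝ n φ ∧ HasCompactSupport φ ∧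
        tsupport φ ⊆ {p : ℝ × ℝ | 0 < p.2} ∧ φ ≠ 0 ∧
        r = dirichletEnergy φ / hyperbolicNormSq φ} = 1 / 4 := by
  refine ⟨fun ε hε => ?near_extremal,
    csInf_eq_of_forall_ge_of_forall_gt_exists_lt ?nonempty ?lower_bound ?sharp⟩
  case near_extremal =>
    obtain ⟨φ, hφ, h⟩ := exists_dirichletEnergy_lt hε
    exact ⟨φ, hφ.of_le (mod_cast le_top), h⟩
  case nonempty =>
    obtain ⟨φ, hφ, hφc, hφs, hne, -⟩ := exists_dirichletEnergy_lt one_pos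
    exact ⟨_, φ, hφ.of_le (mod_cast le_top), hφc, hφs, hne, rfl⟩
  case lower_bound =>
    rintro _ ⟨φ, hφ, hφc, hφs, hne, rfl⟩
    rw [le_div_iff₀ (hyperbolicNormSq_pos hφ.continuous hφc hφs hne)]
    exact quarter_mul_hyperbolicNormSq_le_dirichletEnergy (hφ.of_le (mod_cast hn)) hφc hφs
  case sharp =>
    intro w hw
    obtain ⟨φ, hφ, hφc, hφs, hne, hlt⟩ := exists_dirichletEnergy_lt (sub_pos.2 hw)
    refine ⟨_, ⟨φ, hφ.of_le (mod_cast le_top), hφc, hφs, hne, rfl⟩, ?_⟩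
    rwa [div_lt_iff₀ (hyperbolicNormSq_pos hφ.continuous hφc hφs hne), ← add_sub_cancel (1 / 4) w]

/-- Sharpness of the constant 1/4: for every `ε > 0` there is a nonzero compactly supported C¹
function on the upper half-plane whose Dirichlet energy is less than `(1/4 + ε)` times its
hyperbolic L² norm; consequently the infimum of the hyperbolic Rayleigh quotients equals `1/4`. -/
theorem stmt_2 :
    (∀ ε > (0 : ℝ), ∃ φ : ℝ × ℝ → ℝ, ContDiff ℝ 1 φ ∧ HasCompactSupport φ ∧
      tsupport φ ⊆ {p : ℝ × ℝ | 0 < p.2} ∧ φ ≠ 0 ∧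
      (∫ p : ℝ × ℝ, (fderiv ℝ φ p (1, 0) ^ 2 + fderiv ℝ φ p (0, 1) ^ 2)) <
        (1 / 4 + ε) * ∫ p : ℝ × ℝ, φ p ^ 2 / p.2 ^ 2) ∧
    sInf {r : ℝ | ∃ φ : ℝ × ℝ → ℝ, ContDiff ℝ 1 φ ∧ HasCompactSupport φ ∧
        tsupport φ ⊆ {p : ℝ × ℝ | 0 < p.2} ∧ φ ≠ 0 ∧
        r = (∫ p : ℝ × ℝ, (fderiv ℝ φ p (1, 0) ^ 2 + fderiv ℝ φ p (0, 1) ^ 2)) /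
            (∫ p : ℝ × ℝ, φ p ^ 2 / p.2 ^ 2)} = 1 / 4 := by
  exact stmt_2_general (n := 1) le_rfl
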